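/- Let N ≥ 2, let l ≥ 1 be an integer, let 0 ≤ α < β < ∞ and μ ∈ ℝ. Suppose v : [α,β] → ℝ is continuously differentiable on [α,β], twice differentiable on (α,β), positive on [α,β], satisfies −v''(r) − ((N−1)/r) v'(r) + (l(l+N−2)/r²) v(r) = μ v(r) for all r ∈ (α,β), and v'(α) = v'(β) = 0. Define G : (α,∞) → ℝ by G(r) = v(r) for r ∈ (α,β] and G(r) = v(β) for r ≥ β (so G is C¹ and G'(r) = 0 for r > β). Let Ω ⊂ ℝ^N be a bounded domain such that the Lebesgue measure of Ω ∩ closure(B_α) is zero and |Ω| = |B_β \ closure(B_α)|. Then ∫_Ω ( G'(|x|)² + l(l+N−2) G(|x|)² / |x|² ) dx ≤ μ ∫_Ω G(|x|)² dx, and equality holds if and only if Ω coincides with B_β \ closure(B_α) up to a set of Lebesgue measure zero. -/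

import Mathlib

open MeasureTheory Set

/-!
Write `c = l (l + N - 2) > 0`. If `α = 0`, then `r v' + (N - 2) v` has derivative
`(c / r - μ r) v ≥ k / r - L` with `k > 0`, so it tends to `-∞` at the origin, although it is
continuous there: hence `0 < α`.

The flux `r ^ (N - 1) v'` vanishes at `α` and `β` and has derivative `r ^ (N - 1) q v`, where
`q = c / r ^ 2 - μ` is strictly decreasing. Thus `q` changes sign from `+` to `-`, the flux first
increases and then decreases, `v' ≥ 0` and `q β < 0`. Consequently
`H r = G' r ^ 2 + q r * G r ^ 2` is larger than `H β` for `r < β` and smaller for `r > β`, so among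
sets of equal measure outside the ball of radius `α` the annulus is the unique maximiser of
`∫ H(|x|)`. On the annulus this integral vanishes, since `(r ^ (N - 1) v' v)' = r ^ (N - 1) H`.
-/

open Filter Metric Topology

section Bathtub

variable {X : Type*} [MeasurableSpace X] {ν : Measure X} {f : X → ℝ} {s t : Set X} {k : ℝ}

lemma measure_eq_zero_of_setIntegral_eq_zero_of_pos (hf : IntegrableOn f s ν)
    (hpos : ∀ᵐ x ∂ν.restrict s, 0 < f x) (hzero : ∫ x in s, f x ∂ν = 0) : ν s = 0 := by
  have hf_zero : f =ᵐ[ν.restrict s] 0 :=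
    (integral_eq_zero_iff_of_nonneg_ae (hpos.mono fun x hx => hx.le) hf).1 hzero
  have hfalse : ∀ᵐ _ ∂ν.restrict s, False := by
    filter_upwards [hpos, hf_zero] with x hx hx0 using hx.ne' hx0
  rwa [eventually_false_iff_eq_bot, ae_eq_bot, Measure.restrict_eq_zero] at hfalse

lemma setIntegral_sub_setIntegral_of_measure_eq (hs : NullMeasurableSet s ν)
    (ht : NullMeasurableSet t ν) (hst : ν s = ν t) (ht_fin : ν t ≠ ⊤)
    (hfs : IntegrableOn f s ν) (hft : IntegrableOn f t ν) (k : ℝ) :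
    ∫ x in t, f x ∂ν - ∫ x in s, f x ∂ν =
      ∫ x in t \ s, (f x - k) ∂ν + ∫ x in s \ t, (k - f x) ∂ν := by
  have hks : IntegrableOn (fun _ => k) s ν := integrableOn_const (hst ▸ ht_fin)
  have hkt : IntegrableOn (fun _ => k) t ν := integrableOn_const ht_fin
  have hsplit_s := integral_inter_add_sdiff₀ ht (hks.sub hfs)
  have hsplit_t := integral_inter_add_sdiff₀ hs (hft.sub hkt)
  have hinter : ∫ x in s ∩ t, (k - f x) ∂ν = -∫ x in t ∩ s, (f x - k) ∂ν := by
    simp only [← integral_neg, neg_sub, inter_comm]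
  have hconst : ∫ _ in s, k ∂ν = ∫ _ in t, k ∂ν := by
    simp only [setIntegral_const, Measure.real, hst]
  simp only [Pi.sub_apply, integral_sub hks hfs, integral_sub hft hkt] at hsplit_s hsplit_t
  linarith

theorem setIntegral_le_setIntegral_of_measure_eq (hs : NullMeasurableSet s ν)
    (ht : NullMeasurableSet t ν) (hst : ν s = ν t) (ht_fin : ν t ≠ ⊤)
    (hfs : IntegrableOn f s ν) (hft : IntegrableOn f t ν)
    (hle : ∀ᵐ x ∂ν.restrict (s \ t), f x ≤ k) (hge : ∀ᵐ x ∂ν.restrict (t \ s), k ≤ f x) :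
    ∫ x in s, f x ∂ν ≤ ∫ x in t, f x ∂ν := by
  have hsub := setIntegral_sub_setIntegral_of_measure_eq hs ht hst ht_fin hfs hft k
  have hts : 0 ≤ ∫ x in t \ s, (f x - k) ∂ν :=
    integral_nonneg_of_ae (hge.mono fun x hx => sub_nonneg.2 hx)
  have hst' : 0 ≤ ∫ x in s \ t, (k - f x) ∂ν :=
    integral_nonneg_of_ae (hle.mono fun x hx => sub_nonneg.2 hx)
  linarith

theorem setIntegral_eq_setIntegral_iff_of_measure_eq (hs : NullMeasurableSet s ν)
    (ht : NullMeasurableSet t ν) (hst : ν s = ν t) (ht_fin : ν t ≠ ⊤)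
    (hfs : IntegrableOn f s ν) (hft : IntegrableOn f t ν)
    (hlt : ∀ᵐ x ∂ν.restrict (s \ t), f x < k) (hgt : ∀ᵐ x ∂ν.restrict (t \ s), k < f x) :
    ∫ x in s, f x ∂ν = ∫ x in t, f x ∂ν ↔ ν (symmDiff s t) = 0 := by
  refine ⟨fun heq => ?_, fun h => setIntegral_congr_set (measure_symmDiff_eq_zero_iff.1 h)⟩
  have hsub := setIntegral_sub_setIntegral_of_measure_eq hs ht hst ht_fin hfs hft k
  have hpos_ts : ∀ᵐ x ∂ν.restrict (t \ s), 0 < f x - k := hgt.mono fun x hx => sub_pos.2 hx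
  have hpos_st : ∀ᵐ x ∂ν.restrict (s \ t), 0 < k - f x := hlt.mono fun x hx => sub_pos.2 hx
  have hts : 0 ≤ ∫ x in t \ s, (f x - k) ∂ν :=
    integral_nonneg_of_ae (hpos_ts.mono fun x hx => hx.le)
  have hst' : 0 ≤ ∫ x in s \ t, (k - f x) ∂ν :=
    integral_nonneg_of_ae (hpos_st.mono fun x hx => hx.le)
  have hint_ts : IntegrableOn (fun x => f x - k) (t \ s) ν :=
    (hft.sub (integrableOn_const ht_fin)).mono_set sdiff_subset
  have hint_st : IntegrableOn (fun x => k - f x) (s \ t) ν :=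
    ((integrableOn_const (hst ▸ ht_fin)).sub hfs).mono_set sdiff_subset
  rw [symmDiff_def]
  exact measure_union_null
    (measure_eq_zero_of_setIntegral_eq_zero_of_pos hint_st hpos_st (by linarith))
    (measure_eq_zero_of_setIntegral_eq_zero_of_pos hint_ts hpos_ts (by linarith))

end Bathtub

section RealDerivative

variable {a b : ℝ} {w q g : ℝ → ℝ}

lemma neg_right_of_hasDerivAt_strictAntiOn_mul (hab : a < b) (hw : ContinuousOn w (Icc a b))
    (hderiv : ∀ r ∈ Ioo a b, HasDerivAt w (q r * g r) r) (hq : StrictAntiOn q (Ioc a b))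
    (hg : ∀ r ∈ Ioo a b, 0 < g r) (hw_eq : w a = w b) : q b < 0 := by
  by_contra! hqb
  have hmono : StrictMonoOn w (Icc a b) := by
    refine strictMonoOn_of_hasDerivWithinAt_pos (f' := fun r => q r * g r) (convex_Icc a b) hw
      ?_ ?_ <;> rw [interior_Icc] <;> intro r hr
    · exact (hderiv r hr).hasDerivWithinAt
    · have hqr : q b < q r := hq (Ioo_subset_Ioc_self hr) (right_mem_Ioc.2 hab) hr.2
      exact mul_pos (hqb.trans_lt hqr) (hg r hr)
  exact (hmono (left_mem_Icc.2 hab.le) (right_mem_Icc.2 hab.le) hab).ne hw_eq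

/- Up to the last point where `q ≥ 0` the function `w` increases from `w a`, afterwards it
decreases to `w b`. -/
lemma nonneg_of_hasDerivAt_antitoneOn_mul (hw : ContinuousOn w (Icc a b))
    (hderiv : ∀ r ∈ Ioo a b, HasDerivAt w (q r * g r) r) (hq : AntitoneOn q (Ioo a b))
    (hg : ∀ r ∈ Ioo a b, 0 ≤ g r) (hwa : 0 ≤ w a) (hwb : 0 ≤ w b) :
    ∀ r ∈ Ioo a b, 0 ≤ w r := by
  intro r hr
  rcases le_total 0 (q r) with hqr | hqr
  · have hmono : MonotoneOn w (Icc a r) := by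
      refine monotoneOn_of_hasDerivWithinAt_nonneg (f' := fun s => q s * g s) (convex_Icc a r)
        (hw.mono (Icc_subset_Icc_right hr.2.le)) ?_ ?_ <;> rw [interior_Icc] <;> intro s hs <;>
        have hs' : s ∈ Ioo a b := ⟨hs.1, hs.2.trans hr.2⟩
      · exact (hderiv s hs').hasDerivWithinAt
      · exact mul_nonneg (hqr.trans (hq hs' hr hs.2.le)) (hg s hs')
    exact hwa.trans (hmono (left_mem_Icc.2 hr.1.le) (right_mem_Icc.2 hr.1.le) hr.1.le)
  · have hanti : AntitoneOn w (Icc r b) := by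
      refine antitoneOn_of_hasDerivWithinAt_nonpos (f' := fun s => q s * g s) (convex_Icc r b)
        (hw.mono (Icc_subset_Icc_left hr.1.le)) ?_ ?_ <;> rw [interior_Icc] <;> intro s hs <;>
        have hs' : s ∈ Ioo a b := ⟨hr.1.trans hs.1, hs.2⟩
      · exact (hderiv s hs').hasDerivWithinAt
      · exact mul_nonpos_of_nonpos_of_nonneg ((hq hr hs' hs.1.le).trans hqr) (hg s hs')
    exact hwb.trans (hanti (left_mem_Icc.2 hr.2.le) (right_mem_Icc.2 hr.2.le) hr.2.le)

lemma tendsto_nhdsGT_zero_atBot_of_div_sub_le_deriv {f f' : ℝ → ℝ} {k L : ℝ} (hb : 0 < b)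
    (hk : 0 < k) (hderiv : ∀ r ∈ Ioo 0 b, HasDerivAt f (f' r) r)
    (hle : ∀ r ∈ Ioo 0 b, k / r - L ≤ f' r) : Tendsto f (𝓝[>] 0) atBot := by
  set g : ℝ → ℝ := fun r => f r - k * Real.log r + L * r with hg_def
  have hg_deriv : ∀ r ∈ Ioo 0 b, HasDerivAt g (f' r - k * r⁻¹ + L * 1) r := fun r hr =>
    ((hderiv r hr).sub ((Real.hasDerivAt_log hr.1.ne').const_mul k)).add
      ((hasDerivAt_id r).const_mul L)
  have hg_mono : MonotoneOn g (Ioo 0 b) := by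
    refine monotoneOn_of_hasDerivWithinAt_nonneg (convex_Ioo 0 b)
      (fun r hr => (hg_deriv r hr).continuousAt.continuousWithinAt)
      (fun r hr => (hg_deriv r (interior_subset hr)).hasDerivWithinAt) fun r hr => ?_
    have hkr := hle r (interior_subset hr)
    rw [div_eq_mul_inv] at hkr
    linarith
  have hupper : f ≤ᶠ[𝓝[>] 0] fun r => k * Real.log r + (g (b / 2) - L * r) := by
    filter_upwards [Ioo_mem_nhdsGT (half_pos hb)] with r hr
    have hgr : g r ≤ g (b / 2) :=
      hg_mono ⟨hr.1, hr.2.trans (half_lt_self hb)⟩ ⟨half_pos hb, half_lt_self hb⟩ hr.2.le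
    simp only [hg_def] at hgr ⊢
    linarith
  have hlinear : Tendsto (fun r => g (b / 2) - L * r) (𝓝[>] 0) (𝓝 (g (b / 2) - L * 0)) :=
    Continuous.tendsto (by fun_prop) 0 |>.mono_left nhdsWithin_le_nhds
  exact tendsto_atBot_mono' _ hupper
    ((Real.tendsto_log_nhdsGT_zero.const_mul_atBot hk).atBot_add hlinear)

end RealDerivative

lemma ball_sdiff_closure_ball_eq_norm_preimage_Ioo {E : Type*} [SeminormedAddCommGroup E]
    [NormedSpace ℝ E] {a : ℝ} (ha : a ≠ 0) (b : ℝ) :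
    ball (0 : E) b \ closure (ball 0 a) = norm ⁻¹' Ioo a b := by
  ext x
  simp [closure_ball (0 : E) ha, and_comm]

section RadialIntegration

variable {E : Type*} [NormedAddCommGroup E] [MeasurableSpace E] {ν : Measure E} {s : Set E}
  {a b : ℝ}

section OpensMeasurable

variable [OpensMeasurableSpace E]

lemma integrableOn_comp_min_norm {f : ℝ → ℝ} (hab : a ≤ b) (hf : ContinuousOn f (Icc a b))
    (hs_fin : ν s ≠ ⊤) (hs : ∀ᵐ x ∂ν.restrict s, a < ‖x‖) :
    IntegrableOn (fun x => f (min ‖x‖ b)) s ν := by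
  have hext : Continuous (IccExtend hab ((Icc a b).domRestrict f)) :=
    (continuousOn_iff_continuous_domRestrict.1 hf).Icc_extend'
  obtain ⟨C, hC⟩ := isCompact_Icc.exists_bound_of_continuousOn hf
  have hint : IntegrableOn (fun x : E => IccExtend hab ((Icc a b).domRestrict f) ‖x‖) s ν :=
    Measure.integrableOn_of_bounded hs_fin
      (hext.measurable.comp measurable_norm).aestronglyMeasurable
      (ae_of_all _ fun x => hC _ (projIcc a b hab ‖x‖).2)
  refine hint.congr ?_
  filter_upwards [hs] with x hx
  simp [IccExtend, projIcc, domRestrict_apply, min_comm b, max_eq_right (le_min hx.le hab)]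

lemma integrableOn_div_norm_sq {f : E → ℝ} (hf : IntegrableOn f s ν) (ha : 0 < a)
    (hs : ∀ᵐ x ∂ν.restrict s, a < ‖x‖) : IntegrableOn (fun x => f x / ‖x‖ ^ 2) s ν := by
  simp only [div_eq_mul_inv]
  refine hf.mul_bdd (c := (a ^ 2)⁻¹) (by measurability) ?_
  filter_upwards [hs] with x hx
  rw [norm_inv, norm_pow, norm_norm]
  gcongr

variable [NormedSpace ℝ E]

lemma ae_restrict_lt_norm_of_measure_inter_closure_ball (ha : a ≠ 0)
    (hs : ν (s ∩ closure (ball 0 a)) = 0) : ∀ᵐ x ∂ν.restrict s, a < ‖x‖ := by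
  rw [closure_ball _ ha, inter_comm,
    ← Measure.restrict_apply_eq_zero measurableSet_closedBall] at hs
  filter_upwards [measure_eq_zero_iff_ae_notMem.1 hs] with x hx
  simpa using hx

end OpensMeasurable

variable [NormedSpace ℝ E] [BorelSpace E] [FiniteDimensional ℝ E] [ν.IsAddHaarMeasure]

lemma setIntegral_norm_preimage_Ioo [Nontrivial E] {F : Type*} [NormedAddCommGroup F]
    [NormedSpace ℝ F] (f : ℝ → F) (ha : 0 ≤ a) :
    ∫ x in norm ⁻¹' Ioo a b, f ‖x‖ ∂ν =
      Module.finrank ℝ E • ν.real (ball 0 1) •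
        ∫ r in Ioo a b, r ^ (Module.finrank ℝ E - 1) • f r := by
  have hsubset : Ioo a b ⊆ Ioi 0 := fun r hr => ha.trans_lt hr.1
  rw [← integral_indicator (measurable_norm measurableSet_Ioo)]
  refine (integral_fun_norm_addHaar ν ((Ioo a b).indicator f)).trans ?_
  have hindicator : ∀ r : ℝ, r ^ (Module.finrank ℝ E - 1) • (Ioo a b).indicator f r =
      (Ioo a b).indicator (fun r => r ^ (Module.finrank ℝ E - 1) • f r) r :=
    fun r => (indicator_smul_apply _ (fun r => r ^ (Module.finrank ℝ E - 1)) f r).symm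
  simp only [hindicator]
  rw [setIntegral_indicator measurableSet_Ioo, inter_eq_right.2 hsubset]

lemma ae_restrict_sdiff_norm_preimage_Ioo_lt_norm (hb : b ≠ 0)
    (hs : ∀ᵐ x ∂ν.restrict s, a < ‖x‖) :
    ∀ᵐ x ∂ν.restrict (s \ norm ⁻¹' Ioo a b), b < ‖x‖ := by
  have hnot_mem : ∀ᵐ x ∂ν.restrict (s \ norm ⁻¹' Ioo a b), x ∉ norm ⁻¹' Ioo a b := by
    rw [sdiff_eq, inter_comm, ← Measure.restrict_restrict
      (measurable_norm measurableSet_Ioo).compl]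
    exact ae_restrict_mem (measurable_norm measurableSet_Ioo).compl
  have hnot_sphere : ∀ᵐ x ∂ν, x ∉ sphere (0 : E) b :=
    measure_eq_zero_iff_ae_notMem.1 (Measure.addHaar_sphere_of_ne_zero ν 0 hb)
  filter_upwards [hnot_mem, ae_restrict_of_ae hnot_sphere,
    ae_restrict_of_ae_restrict_of_subset sdiff_subset hs] with x hx hxb hax
  have hle : b ≤ ‖x‖ := not_lt.1 fun h => hx ⟨hax, h⟩
  exact hle.lt_of_ne fun h => hxb (mem_sphere_zero_iff_norm.2 h.symm)

end RadialIntegration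

/-- `v` is a positive solution on `[a, b]` of the radial eigenvalue equation
`-v'' - (κ / r) v' + (c / r ^ 2) v = μ v`, with first derivative `v'` and second derivative `v''`.
In dimension `N` and for spherical harmonics of degree `l` one has `κ = N - 1` and
`c = l (l + N - 2)`. Boundary conditions are not included. -/
structure IsPositiveRadialEigenfunction (κ c μ a b : ℝ) (v v' v'' : ℝ → ℝ) : Prop where
  hasDerivWithinAt : ∀ r ∈ Icc a b, HasDerivWithinAt v (v' r) (Icc a b) r
  continuousOn_deriv : ContinuousOn v' (Icc a b)
  hasDerivAt_deriv : ∀ r ∈ Ioo a b, HasDerivAt v' (v'' r) r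
  pos : ∀ r ∈ Icc a b, 0 < v r
  equation : ∀ r ∈ Ioo a b, -v'' r - κ / r * v' r + c / r ^ 2 * v r = μ * v r

/-- The integrand `G' ^ 2 + (c / r ^ 2) G ^ 2 - μ G ^ 2` of the Rayleigh inequality, as a function
of the radius. Here `G` is the extension of `v` by `v b` beyond `b`, written `v (min r b)`;
its derivative is `v' (min r b)` as long as `v' b = 0`. -/
noncomputable def rayleighDefect (c μ b : ℝ) (v v' : ℝ → ℝ) (r : ℝ) : ℝ :=
  v' (min r b) ^ 2 + (c / r ^ 2 - μ) * v (min r b) ^ 2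

lemma strictAntiOn_div_sq_sub {c : ℝ} (hc : 0 < c) (μ : ℝ) :
    StrictAntiOn (fun r : ℝ => c / r ^ 2 - μ) (Ioi 0) := by
  intro r (hr : 0 < r) s _ hrs
  dsimp only
  gcongr

lemma rayleighDefect_eq_sub (c μ b : ℝ) (v v' : ℝ → ℝ) (r : ℝ) :
    rayleighDefect c μ b v v' r =
      v' (min r b) ^ 2 + c * v (min r b) ^ 2 / r ^ 2 - μ * v (min r b) ^ 2 := by
  rw [rayleighDefect]
  ring

lemma rayleighDefect_lt_right {c b : ℝ} {v : ℝ → ℝ} (hc : 0 < c) (hb : 0 < b) (hvb : v b ≠ 0)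
    (μ : ℝ) (v' : ℝ → ℝ) {r : ℝ} (hr : b < r) :
    rayleighDefect c μ b v v' r < rayleighDefect c μ b v v' b := by
  simp only [rayleighDefect, min_self, min_eq_right hr.le]
  gcongr

namespace IsPositiveRadialEigenfunction

variable {κ c μ a b : ℝ} {v v' v'' : ℝ → ℝ}

lemma continuousOn (h : IsPositiveRadialEigenfunction κ c μ a b v v' v'') :
    ContinuousOn v (Icc a b) :=
  fun r hr => (h.hasDerivWithinAt r hr).continuousWithinAt

lemma hasDerivAt (h : IsPositiveRadialEigenfunction κ c μ a b v v' v'') {r : ℝ}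
    (hr : r ∈ Ioo a b) : HasDerivAt v (v' r) r :=
  (h.hasDerivWithinAt r (Ioo_subset_Icc_self hr)).hasDerivAt (Icc_mem_nhds hr.1 hr.2)

lemma hasDerivAt_mul_deriv_add (h : IsPositiveRadialEigenfunction κ c μ a b v v' v'') {r : ℝ}
    (hr : r ∈ Ioo a b) (hr0 : r ≠ 0) :
    HasDerivAt (fun r => r * v' r + (κ - 1) * v r) ((c / r - μ * r) * v r) r := by
  refine (((hasDerivAt_id r).mul (h.hasDerivAt_deriv r hr)).add
    ((h.hasDerivAt hr).const_mul (κ - 1))).congr_deriv ?_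
  have hv'' : v'' r = (c / r ^ 2 - μ) * v r - κ / r * v' r := by linarith [h.equation r hr]
  simp only [hv'', id]
  field_simp
  ring

theorem left_ne_zero (h : IsPositiveRadialEigenfunction κ c μ a b v v' v'') (hab : a < b)
    (hc : 0 < c) : a ≠ 0 := by
  rintro rfl
  have hv := h.continuousOn
  have hv' := h.continuousOn_deriv
  obtain ⟨m, hm, hmin⟩ := isCompact_Icc.exists_isMinOn (nonempty_Icc.2 hab.le) hv
  obtain ⟨L, hL⟩ := isCompact_Icc.bddAbove_image
    (show ContinuousOn (fun r => μ * r * v r) (Icc 0 b) by fun_prop)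
  have hderiv_ge : ∀ r ∈ Ioo 0 b, c * v m / r - L ≤ (c / r - μ * r) * v r := by
    intro r hr
    have hrIcc := Ioo_subset_Icc_self hr
    have hsingular : c * v m / r ≤ c * v r / r :=
      div_le_div_of_nonneg_right (mul_le_mul_of_nonneg_left (hmin hrIcc) hc.le) hr.1.le
    have hregular : μ * r * v r ≤ L := hL (mem_image_of_mem _ hrIcc)
    calc c * v m / r - L ≤ c * v r / r - μ * r * v r := by linarith
      _ = (c / r - μ * r) * v r := by ring
  have hatBot : Tendsto (fun r => r * v' r + (κ - 1) * v r) (𝓝[>] 0) atBot :=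
    tendsto_nhdsGT_zero_atBot_of_div_sub_le_deriv hab (mul_pos hc (h.pos m hm))
      (fun r hr => h.hasDerivAt_mul_deriv_add hr hr.1.ne') hderiv_ge
  have hcont : ContinuousOn (fun r => r * v' r + (κ - 1) * v r) (Icc 0 b) := by fun_prop
  have hnhds := (hcont 0 (left_mem_Icc.2 hab.le)).mono_of_mem_nhdsWithin (Icc_mem_nhdsGT hab)
  exact not_tendsto_atBot_of_tendsto_nhds hnhds hatBot

variable {n : ℕ}

lemma hasDerivAt_flux (h : IsPositiveRadialEigenfunction n c μ a b v v' v'') {r : ℝ}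
    (hr : r ∈ Ioo a b) (hr0 : r ≠ 0) :
    HasDerivAt (fun r => r ^ n * v' r) ((c / r ^ 2 - μ) * (r ^ n * v r)) r := by
  refine ((hasDerivAt_pow n r).mul (h.hasDerivAt_deriv r hr)).congr_deriv ?_
  have hv'' : v'' r = (c / r ^ 2 - μ) * v r - n / r * v' r := by linarith [h.equation r hr]
  have hpow : (n : ℝ) * r ^ (n - 1) = r ^ n * (n / r) := by
    cases n <;> simp [pow_succ, field]
  rw [hv'', hpow]
  ring

lemma continuousOn_flux (h : IsPositiveRadialEigenfunction n c μ a b v v' v'') :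
    ContinuousOn (fun r => r ^ n * v' r) (Icc a b) :=
  (continuousOn_pow n).mul h.continuousOn_deriv

lemma div_sq_right_sub_neg (h : IsPositiveRadialEigenfunction n c μ a b v v' v'') (hc : 0 < c)
    (ha : 0 < a) (hab : a < b) (hva : v' a = 0) (hvb : v' b = 0) : c / b ^ 2 - μ < 0 :=
  neg_right_of_hasDerivAt_strictAntiOn_mul (q := fun r => c / r ^ 2 - μ) hab h.continuousOn_flux
    (fun _ hr => h.hasDerivAt_flux hr (ha.trans hr.1).ne')
    ((strictAntiOn_div_sq_sub hc μ).mono fun _ hr => ha.trans hr.1)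
    (fun r hr => mul_pos (pow_pos (ha.trans hr.1) n) (h.pos r (Ioo_subset_Icc_self hr)))
    (by simp only [hva, hvb, mul_zero])

theorem monotoneOn (h : IsPositiveRadialEigenfunction n c μ a b v v' v'') (hc : 0 < c)
    (ha : 0 < a) (hva : v' a = 0) (hvb : v' b = 0) : MonotoneOn v (Icc a b) := by
  have hflux : ∀ r ∈ Ioo a b, 0 ≤ r ^ n * v' r :=
    nonneg_of_hasDerivAt_antitoneOn_mul h.continuousOn_flux
      (fun _ hr => h.hasDerivAt_flux hr (ha.trans hr.1).ne')
      ((strictAntiOn_div_sq_sub hc μ).antitoneOn.mono fun _ hr => ha.trans hr.1)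
      (fun r hr => (mul_pos (pow_pos (ha.trans hr.1) n) (h.pos r (Ioo_subset_Icc_self hr))).le)
      (by simp only [hva, mul_zero, le_refl]) (by simp only [hvb, mul_zero, le_refl])
  refine monotoneOn_of_hasDerivWithinAt_nonneg (f' := v') (convex_Icc a b) h.continuousOn ?_ ?_ <;>
    rw [interior_Icc] <;> intro r hr
  · exact (h.hasDerivAt hr).hasDerivWithinAt
  · exact nonneg_of_mul_nonneg_right (hflux r hr) (pow_pos (ha.trans hr.1) n)

theorem integral_pow_mul_rayleighDefect (h : IsPositiveRadialEigenfunction n c μ a b v v' v'')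
    (ha : 0 < a) (hab : a ≤ b) (hva : v' a = 0) (hvb : v' b = 0) :
    ∫ r in Ioo a b, r ^ n * rayleighDefect c μ b v v' r = 0 := by
  have hv := h.continuousOn
  have hv' := h.continuousOn_deriv
  have hcont : ContinuousOn (fun r => r ^ n * (v' r ^ 2 + (c / r ^ 2 - μ) * v r ^ 2))
      (Icc a b) := by
    have hdiv : ContinuousOn (fun r : ℝ => c / r ^ 2) (Icc a b) :=
      continuousOn_const.div (continuousOn_pow 2) fun r hr => (pow_pos (ha.trans_le hr.1) 2).ne'
    fun_prop
  calc ∫ r in Ioo a b, r ^ n * rayleighDefect c μ b v v' r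
      = ∫ r in Ioo a b, r ^ n * (v' r ^ 2 + (c / r ^ 2 - μ) * v r ^ 2) :=
        setIntegral_congr_fun measurableSet_Ioo fun r hr => by
          simp only [rayleighDefect, min_eq_left hr.2.le]
    _ = ∫ r in a..b, r ^ n * (v' r ^ 2 + (c / r ^ 2 - μ) * v r ^ 2) := by
        rw [← integral_Ioc_eq_integral_Ioo, intervalIntegral.integral_of_le hab]
    _ = b ^ n * v' b * v b - a ^ n * v' a * v a :=
        intervalIntegral.integral_eq_sub_of_hasDerivAt_of_le hab (h.continuousOn_flux.mul hv)
          (fun r hr => ((h.hasDerivAt_flux hr (ha.trans hr.1).ne').mul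
            (h.hasDerivAt hr)).congr_deriv (by ring))
          (hcont.intervalIntegrable_of_Icc hab)
    _ = 0 := by rw [hva, hvb]; ring

lemma rayleighDefect_right_lt (h : IsPositiveRadialEigenfunction n c μ a b v v' v'') (hc : 0 < c)
    (ha : 0 < a) (hab : a < b) (hva : v' a = 0) (hvb : v' b = 0) {r : ℝ} (hr : r ∈ Ioo a b) :
    rayleighDefect c μ b v v' b < rayleighDefect c μ b v v' r := by
  have hrIcc := Ioo_subset_Icc_self hr
  have hvr : 0 < v r := h.pos r hrIcc
  have hle : v r ≤ v b := h.monotoneOn hc ha hva hvb hrIcc (right_mem_Icc.2 hab.le) hr.2.le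
  have hneg : c / b ^ 2 - μ < 0 := h.div_sq_right_sub_neg hc ha hab hva hvb
  have hlt : c / b ^ 2 - μ < c / r ^ 2 - μ :=
    strictAntiOn_div_sq_sub hc μ (ha.trans hr.1) (ha.trans hab) hr.2
  simp only [rayleighDefect, min_self, min_eq_left hr.2.le, hvb]
  calc 0 ^ 2 + (c / b ^ 2 - μ) * v b ^ 2 ≤ 0 + (c / b ^ 2 - μ) * v r ^ 2 := by
        rw [zero_pow two_ne_zero]
        gcongr 0 + ?_
        exact mul_le_mul_of_nonpos_left (by gcongr) hneg.le
    _ < v' r ^ 2 + (c / r ^ 2 - μ) * v r ^ 2 :=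
        add_lt_add_of_le_of_lt (sq_nonneg _) (by gcongr)

end IsPositiveRadialEigenfunction

section Comparison

variable {E : Type*} [NormedAddCommGroup E] [MeasurableSpace E] {ν : Measure E}
  {c μ α β : ℝ} {v v' v'' : ℝ → ℝ} {Ω : Set E}

section OpensMeasurable

variable [OpensMeasurableSpace E]

lemma integrableOn_sq_add_mul_sq_div_norm_sq (c : ℝ) (hα : 0 < α) (hαβ : α ≤ β)
    (hv : ContinuousOn v (Icc α β)) (hv' : ContinuousOn v' (Icc α β))
    (hΩ_fin : ν Ω ≠ ⊤) (hΩ : ∀ᵐ x ∂ν.restrict Ω, α < ‖x‖) :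
    IntegrableOn (fun x => v' (min ‖x‖ β) ^ 2 + c * v (min ‖x‖ β) ^ 2 / ‖x‖ ^ 2) Ω ν :=
  (integrableOn_comp_min_norm hαβ (hv'.pow 2) hΩ_fin hΩ).add
    (integrableOn_div_norm_sq
      ((integrableOn_comp_min_norm hαβ (hv.pow 2) hΩ_fin hΩ).const_mul c) hα hΩ)

lemma integrableOn_rayleighDefect (c μ : ℝ) (hα : 0 < α) (hαβ : α ≤ β)
    (hv : ContinuousOn v (Icc α β)) (hv' : ContinuousOn v' (Icc α β))
    (hΩ_fin : ν Ω ≠ ⊤) (hΩ : ∀ᵐ x ∂ν.restrict Ω, α < ‖x‖) :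
    IntegrableOn (fun x => rayleighDefect c μ β v v' ‖x‖) Ω ν := by
  simp only [rayleighDefect_eq_sub]
  exact (integrableOn_sq_add_mul_sq_div_norm_sq c hα hαβ hv hv' hΩ_fin hΩ).sub
    ((integrableOn_comp_min_norm hαβ (hv.pow 2) hΩ_fin hΩ).const_mul μ)

lemma setIntegral_rayleighDefect (c μ : ℝ) (hα : 0 < α) (hαβ : α ≤ β)
    (hv : ContinuousOn v (Icc α β)) (hv' : ContinuousOn v' (Icc α β))
    (hΩ_fin : ν Ω ≠ ⊤) (hΩ : ∀ᵐ x ∂ν.restrict Ω, α < ‖x‖) :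
    ∫ x in Ω, rayleighDefect c μ β v v' ‖x‖ ∂ν =
      ∫ x in Ω, (v' (min ‖x‖ β) ^ 2 + c * v (min ‖x‖ β) ^ 2 / ‖x‖ ^ 2) ∂ν -
        μ * ∫ x in Ω, v (min ‖x‖ β) ^ 2 ∂ν := by
  simp only [rayleighDefect_eq_sub]
  rw [← integral_const_mul]
  exact integral_sub (integrableOn_sq_add_mul_sq_div_norm_sq c hα hαβ hv hv' hΩ_fin hΩ)
    ((integrableOn_comp_min_norm hαβ (hv.pow 2) hΩ_fin hΩ).const_mul μ)

end OpensMeasurable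

variable [NormedSpace ℝ E] [BorelSpace E] [FiniteDimensional ℝ E] [Nontrivial E]
  [ν.IsAddHaarMeasure]

theorem setIntegral_rayleighDefect_nonpos_and_eq_zero_iff (hc : 0 < c) (hα : 0 < α) (hαβ : α < β)
    (hv : IsPositiveRadialEigenfunction (Module.finrank ℝ E - 1 : ℕ) c μ α β v v' v'')
    (hvα : v' α = 0) (hvβ : v' β = 0) (hΩ_meas : NullMeasurableSet Ω ν)
    (hΩ : ∀ᵐ x ∂ν.restrict Ω, α < ‖x‖) (hvol : ν Ω = ν (norm ⁻¹' Ioo α β)) :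
    ∫ x in Ω, rayleighDefect c μ β v v' ‖x‖ ∂ν ≤ 0 ∧
      (∫ x in Ω, rayleighDefect c μ β v v' ‖x‖ ∂ν = 0 ↔
        ν (symmDiff Ω (norm ⁻¹' Ioo α β)) = 0) := by
  set A : Set E := norm ⁻¹' Ioo α β
  have hA_meas : MeasurableSet A := measurable_norm measurableSet_Ioo
  have hA_fin : ν A ≠ ⊤ :=
    (isBounded_ball (x := (0 : E)) (r := β) |>.subset
      fun x hx => mem_ball_zero_iff.2 hx.2).measure_lt_top.ne
  have hA : ∀ᵐ x ∂ν.restrict A, α < ‖x‖ := (ae_restrict_mem hA_meas).mono fun x hx => hx.1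
  have hA_zero : ∫ x in A, rayleighDefect c μ β v v' ‖x‖ ∂ν = 0 := by
    rw [setIntegral_norm_preimage_Ioo _ hα.le]
    simp only [smul_eq_mul, hv.integral_pow_mul_rayleighDefect hα hαβ.le hvα hvβ, mul_zero,
      smul_zero]
  have hΩ_int := integrableOn_rayleighDefect c μ hα hαβ.le hv.continuousOn
    hv.continuousOn_deriv (hvol ▸ hA_fin) hΩ
  have hA_int := integrableOn_rayleighDefect c μ hα hαβ.le hv.continuousOn
    hv.continuousOn_deriv hA_fin hA
  have houter : ∀ᵐ x ∂ν.restrict (Ω \ A),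
      rayleighDefect c μ β v v' ‖x‖ < rayleighDefect c μ β v v' β :=
    (ae_restrict_sdiff_norm_preimage_Ioo_lt_norm (hα.trans hαβ).ne' hΩ).mono fun x hx =>
      rayleighDefect_lt_right hc (hα.trans hαβ) (hv.pos β (right_mem_Icc.2 hαβ.le)).ne' μ v' hx
  have hinner : ∀ᵐ x ∂ν.restrict (A \ Ω),
      rayleighDefect c μ β v v' β < rayleighDefect c μ β v v' ‖x‖ :=
    ae_restrict_of_ae_restrict_of_subset sdiff_subset <|
      (ae_restrict_mem hA_meas).mono fun x hx => hv.rayleighDefect_right_lt hc hα hαβ hvα hvβ hx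
  rw [← hA_zero]
  exact ⟨setIntegral_le_setIntegral_of_measure_eq hΩ_meas hA_meas.nullMeasurableSet hvol hA_fin
      hΩ_int hA_int (houter.mono fun x hx => hx.le) (hinner.mono fun x hx => hx.le),
    setIntegral_eq_setIntegral_iff_of_measure_eq hΩ_meas hA_meas.nullMeasurableSet hvol hA_fin
      hΩ_int hA_int houter hinner⟩

theorem rayleigh_bound_constant_extension_general (hc : 0 < c) (hα : 0 ≤ α) (hαβ : α < β)
    (hv : IsPositiveRadialEigenfunction ((Module.finrank ℝ E : ℝ) - 1) c μ α β v v' v'')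
    (hvα : v' α = 0) (hvβ : v' β = 0) {G G' : ℝ → ℝ}
    (hG : ∀ r : ℝ, G r = if r ≤ β then v r else v β)
    (hG' : ∀ r : ℝ, G' r = if r < β then v' r else 0)
    (hΩ : NullMeasurableSet Ω ν) (hin : ν (Ω ∩ closure (ball 0 α)) = 0)
    (hvol : ν Ω = ν (ball 0 β \ closure (ball 0 α))) :
    ∫ x in Ω, (G' ‖x‖ ^ 2 + c * G ‖x‖ ^ 2 / ‖x‖ ^ 2) ∂ν ≤ μ * ∫ x in Ω, G ‖x‖ ^ 2 ∂ν ∧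
      (∫ x in Ω, (G' ‖x‖ ^ 2 + c * G ‖x‖ ^ 2 / ‖x‖ ^ 2) ∂ν = μ * ∫ x in Ω, G ‖x‖ ^ 2 ∂ν ↔
        ν (symmDiff Ω (ball 0 β \ closure (ball 0 α))) = 0) := by
  have hα_pos : 0 < α := hα.lt_of_ne (hv.left_ne_zero hαβ hc).symm
  have hΩ_norm := ae_restrict_lt_norm_of_measure_inter_closure_ball hα_pos.ne' hin
  have hΩ_fin : ν Ω ≠ ⊤ :=
    hvol ▸ ((measure_mono sdiff_subset).trans_lt measure_ball_lt_top).ne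
  have hG_min : ∀ r, G r = v (min r β) := fun r => by rw [hG, min_def, apply_ite v]
  have hG'_min : ∀ r, G' r = v' (min r β) := fun r => by
    rw [hG', min_def_lt, apply_ite v', hvβ]
  rw [← Nat.cast_pred Module.finrank_pos] at hv
  rw [ball_sdiff_closure_ball_eq_norm_preimage_Ioo hα_pos.ne'] at hvol ⊢
  simp only [hG_min, hG'_min]
  rw [← sub_nonpos, ← sub_eq_zero, ← setIntegral_rayleighDefect c μ hα_pos hαβ.le
    hv.continuousOn hv.continuousOn_deriv hΩ_fin hΩ_norm]
  exact setIntegral_rayleighDefect_nonpos_and_eq_zero_iff hc hα_pos hαβ hv hvα hvβ hΩ hΩ_norm hvol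

end Comparison

lemma mul_add_sub_two_pos {N l : ℕ} (hN : 2 ≤ N) (hl : 1 ≤ l) :
    0 < (l : ℝ) * ((l : ℝ) + (N : ℝ) - 2) := by
  have hN' : (2 : ℝ) ≤ N := mod_cast hN
  have hl' : (1 : ℝ) ≤ l := mod_cast hl
  exact mul_pos (by linarith) (by linarith)

/-- Proposition prop:bound: for the constant extension `G` of a
positive first eigenfunction `v` of the radial Sturm–Liouville Neumann problem
with `l ≥ 1`, and any bounded domain `Ω ⊂ ℝ^N` with `|Ω ∩ closure B_α| = 0` and
`|Ω| = |B_β \ closure B_α|`, the Rayleigh-type inequality holds, with equality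
iff `Ω` coincides a.e. with `B_β \ closure B_α`. -/
theorem rayleigh_bound_constant_extension
    (N l : ℕ) (hN : 2 ≤ N) (hl : 1 ≤ l)
    (α β μ : ℝ) (hα : 0 ≤ α) (hαβ : α < β)
    (v v' v'' : ℝ → ℝ)
    (hderiv : ∀ r ∈ Set.Icc α β, HasDerivWithinAt v (v' r) (Set.Icc α β) r)
    (hv'cont : ContinuousOn v' (Set.Icc α β))
    (hderiv2 : ∀ r ∈ Set.Ioo α β, HasDerivAt v' (v'' r) r)
    (hpos : ∀ r ∈ Set.Icc α β, 0 < v r)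
    (heq : ∀ r ∈ Set.Ioo α β,
      -v'' r - ((N : ℝ) - 1) / r * v' r
        + ((l : ℝ) * ((l : ℝ) + (N : ℝ) - 2)) / r ^ 2 * v r = μ * v r)
    (hbα : v' α = 0) (hbβ : v' β = 0)
    (G G' : ℝ → ℝ)
    (hG : ∀ r : ℝ, G r = if r ≤ β then v r else v β)
    (hG' : ∀ r : ℝ, G' r = if r < β then v' r else 0)
    (Ω : Set (EuclideanSpace ℝ (Fin N)))
    (hopen : IsOpen Ω) (hconn : IsConnected Ω) (hbdd : Bornology.IsBounded Ω)
    (hin : volume (Ω ∩ closure (Metric.ball (0 : EuclideanSpace ℝ (Fin N)) α)) = 0)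
    (hvol : volume Ω =
      volume (Metric.ball (0 : EuclideanSpace ℝ (Fin N)) β \
        closure (Metric.ball (0 : EuclideanSpace ℝ (Fin N)) α))) :
    (∫ x in Ω, ((G' ‖x‖) ^ 2
        + ((l : ℝ) * ((l : ℝ) + (N : ℝ) - 2)) * (G ‖x‖) ^ 2 / ‖x‖ ^ 2))
      ≤ μ * ∫ x in Ω, (G ‖x‖) ^ 2 ∧
    ((∫ x in Ω, ((G' ‖x‖) ^ 2
        + ((l : ℝ) * ((l : ℝ) + (N : ℝ) - 2)) * (G ‖x‖) ^ 2 / ‖x‖ ^ 2))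
      = μ * ∫ x in Ω, (G ‖x‖) ^ 2 ↔
      volume (symmDiff Ω (Metric.ball (0 : EuclideanSpace ℝ (Fin N)) β \
        closure (Metric.ball (0 : EuclideanSpace ℝ (Fin N)) α))) = 0) := by
  have : Nontrivial (Fin N) := Fin.nontrivial_iff_two_le.2 hN
  exact rayleigh_bound_constant_extension_general (mul_add_sub_two_pos hN hl) hα hαβ
    ⟨hderiv, hv'cont, hderiv2, hpos, by rwa [finrank_euclideanSpace_fin]⟩ hbα hbβ hG hG'
    hopen.nullMeasurableSet hin hvol
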